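/- arXiv:1507.05103 — 3 statements merged into one kernel-verified Lean document; each statement's English description precedes it below -/
import Mathlib

section
/- Let 1 ≤ i ≤ k−1 and let v be a vertex of the hierarchical graph H_{n,k} whose i-th coordinate is 0 and whose coordinates x_{i+1}, …, x_k are all nonzero; such v is a peripheral vertex of a subgraph copy of H_{n,k−i}. Then the degree of v in H_{n,k} equals n + k − i − 2. -/
/-!
A neighbour of `v` arises in exactly one of two ways. Since the last coordinate of `v` is nonzero,
rule (3) and the zero side of rule (2) never apply to `v`. Rule (1) gives the `n - 1` vertices
obtained by changing the last coordinate of `v`. On the nonzero side of rule (2), the shared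
prefix may have any length `m ≤ k - 2` for which the coordinates of `v` after it are all nonzero;
the zero at position `i` forces `i ≤ m`, so this gives the `k - 1 - i` vertices obtained from `v`
by replacing all coordinates after the first `m` by zeros. These two families are
disjoint, because the second kind of replacement changes at least two coordinates.
-/

/-- Rule (1): the two vertices agree on the first `k-1` coordinates and differ
(hence differ in the last coordinate). -/
def rule1 {n k : ℕ} (x y : Fin k → ZMod n) : Prop :=
  x ≠ y ∧ ∀ j : Fin k, (j : ℕ) + 1 < k → x j = y j

/-- Rule (2): `x = x_1…x_i 0…0` and `y = x_1…x_i x_{i+1}…x_k` with `x_j ≠ 0` for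
`i+1 ≤ j ≤ k`, where `0 ≤ i ≤ k-2` (`i` is the length of the shared prefix,
0-indexed coordinates `≥ i` are zero on the `x` side and nonzero on the `y` side). -/
def rule2 {n k : ℕ} (x y : Fin k → ZMod n) : Prop :=
  ∃ i : ℕ, i + 2 ≤ k ∧ (∀ j : Fin k, (j : ℕ) < i → x j = y j) ∧
    (∀ j : Fin k, i ≤ (j : ℕ) → x j = 0) ∧ (∀ j : Fin k, i ≤ (j : ℕ) → y j ≠ 0)

/-- Rule (3): `x = x_1…x_{i-1} x_i 0…0` and `y = x_1…x_{i-1} y_i 0…0` with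
`x_i, y_i ≠ 0`, `x_i ≠ y_i` and `1 ≤ i ≤ k-1` (here `p` is the 0-indexed
position `i-1`, so `p ≤ k-2`). -/
def rule3 {n k : ℕ} (x y : Fin k → ZMod n) : Prop :=
  ∃ p : Fin k, (p : ℕ) + 2 ≤ k ∧ (∀ j : Fin k, j < p → x j = y j) ∧
    x p ≠ 0 ∧ y p ≠ 0 ∧ x p ≠ y p ∧ (∀ j : Fin k, p < j → x j = 0 ∧ y j = 0)

/-- The hierarchical graph `H_{n,k}` on the vertex set `(Z_n)^k`, whose adjacency
is given exactly by the three rules above. -/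
def hierGraph (n k : ℕ) : SimpleGraph (Fin k → ZMod n) :=
  SimpleGraph.fromRel (fun x y => rule1 x y ∨ rule2 x y ∨ rule3 x y)

/-- The root vertex `00…0` of `H_{n,k}`. -/
def hierRoot (n k : ℕ) : Fin k → ZMod n := fun _ => 0

/-- The set of peripheral vertices of `H_{n,k}`: those all of whose coordinates
are nonzero. -/
def peripheral (n k : ℕ) : Set (Fin k → ZMod n) := {v | ∀ j, v j ≠ 0}

/-- The minimum graph distance from a vertex to a set of vertices. -/
noncomputable def distToSet {V : Type*} (G : SimpleGraph V) (v : V) (S : Set V) : ℕ :=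
  sInf (G.dist v '' S)

/-- The eccentricity of a vertex: the maximum graph distance from it to any vertex. -/
noncomputable def eccentricity {V : Type*} (G : SimpleGraph V) (v : V) : ℕ :=
  sSup (Set.range (G.dist v))

/-- The radius of a graph: the minimum eccentricity over all vertices. -/
noncomputable def graphRadius {V : Type*} (G : SimpleGraph V) : ℕ :=
  sInf (Set.range (eccentricity G))

/-- The degree of a vertex, as the number of its neighbors. -/
noncomputable def vdeg {V : Type*} (G : SimpleGraph V) (v : V) : ℕ :=
  (G.neighborSet v).ncard

/-- `ε_v`: the number of edges of the graph both of whose endpoints are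
neighbors of `v`. -/
noncomputable def localEdges {V : Type*} (G : SimpleGraph V) (v : V) : ℕ :=
  {e : Sym2 V | e ∈ G.edgeSet ∧ ∀ w ∈ e, G.Adj v w}.ncard

/-- The clustering coefficient `c(v) = 2 ε_v / (δ_v (δ_v - 1))` of a vertex `v`. -/
noncomputable def clustering {V : Type*} (G : SimpleGraph V) (v : V) : ℚ :=
  (2 * (localEdges G v : ℚ)) / ((vdeg G v : ℚ) * ((vdeg G v : ℚ) - 1))

/-- The vertex `z^{01} = 0101…` (1-indexed: 0 at odd positions, 1 at even). -/
def z01 (n k : ℕ) : Fin k → ZMod n := fun j => if (j : ℕ) % 2 = 0 then 0 else 1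

/-- The vertex `z^{10} = 1010…` (1-indexed: 1 at odd positions, 0 at even). -/
def z10 (n k : ℕ) : Fin k → ZMod n := fun j => if (j : ℕ) % 2 = 0 then 1 else 0

/-- The vertex agreeing with `v` on its first `m` coordinates and zero afterwards. -/
def truncate {n k : ℕ} (v : Fin k → ZMod n) (m : ℕ) : Fin k → ZMod n :=
  fun j => if (j : ℕ) < m then v j else 0

/-- The vertices obtained from `v` by changing exactly the coordinate `l`. -/
def changeAt {n k : ℕ} (v : Fin k → ZMod n) (l : Fin k) : Set (Fin k → ZMod n) :=
  Function.update v l '' {v l}ᶜ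

lemma rule1.symm {n k : ℕ} {x y : Fin k → ZMod n} (h : rule1 x y) : rule1 y x :=
  ⟨h.1.symm, fun j hj => (h.2 j hj).symm⟩

lemma rule1_iff_mem_changeAt {n k : ℕ} (hk : 0 < k) (v w : Fin k → ZMod n) :
    rule1 v w ↔ w ∈ changeAt v ⟨k - 1, by omega⟩ := by
  constructor
  · rintro ⟨hne, h⟩
    have hw : Function.update v ⟨k - 1, by omega⟩ (w ⟨k - 1, by omega⟩) = w := by
      rw [Function.update_eq_iff]
      refine ⟨rfl, fun j hj => h j ?_⟩
      have : (j : ℕ) ≠ k - 1 := fun e => hj (Fin.ext e)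
      omega
    refine ⟨w ⟨k - 1, by omega⟩, fun e => hne ?_, hw⟩
    rw [Set.mem_singleton_iff] at e
    rw [← hw, e, Function.update_eq_self]
  · rintro ⟨a, ha, rfl⟩
    refine ⟨fun e => ha ?_, fun j hj => ?_⟩
    · simpa using (congrFun e ⟨k - 1, by omega⟩).symm
    · rw [Function.update_of_ne]
      rintro rfl
      simp only at hj
      omega

lemma ncard_changeAt {n k : ℕ} (hn : 2 ≤ n) (v : Fin k → ZMod n) (l : Fin k) :
    (changeAt v l).ncard = n - 1 := by
  have : NeZero n := ⟨by omega⟩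
  rw [changeAt, Set.ncard_image_of_injective _ (Function.update_injective v l),
    Set.ncard_compl, Set.ncard_singleton, Nat.card_zmod]

/-- The neighbours of `v` given by rule (2), with `v` on the nonzero side. -/
lemma rule2_iff_mem_truncate {n k i : ℕ} (hi1 : 1 ≤ i) (hik : i + 1 ≤ k) (v w : Fin k → ZMod n)
    (hvi : v ⟨i - 1, by omega⟩ = 0) (hvz : ∀ j : Fin k, i ≤ (j : ℕ) → v j ≠ 0) :
    rule2 w v ↔ w ∈ truncate v '' Set.Ico i (k - 1) := by
  constructor
  · rintro ⟨m, hm, h1, h2, h3⟩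
    refine ⟨m, ⟨?_, by omega⟩, ?_⟩
    · by_contra hlt
      exact h3 ⟨i - 1, by omega⟩ (by simp only; omega) hvi
    · funext j
      by_cases hj : (j : ℕ) < m
      · simp [truncate, hj, h1 j hj]
      · simp [truncate, hj, h2 j (by omega)]
  · rintro ⟨m, ⟨him, hmk⟩, rfl⟩
    refine ⟨m, by omega, fun j hj => by simp [truncate, hj], fun j hj => ?_,
      fun j hj => hvz j (by omega)⟩
    simp [truncate, hj]

/-- Different truncations differ at the position where the shorter one stops, because `v` is
nonzero there. -/
lemma injOn_truncate {n k i : ℕ} (v : Fin k → ZMod n)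
    (hvz : ∀ j : Fin k, i ≤ (j : ℕ) → v j ≠ 0) :
    Set.InjOn (truncate v) (Set.Ico i (k - 1)) := by
  have key : ∀ a b : ℕ, i ≤ a → a < b → b < k - 1 → truncate v a ≠ truncate v b := by
    intro a b ha hab hb e
    have := congrFun e ⟨a, by omega⟩
    simp only [truncate, lt_irrefl, if_false, hab, if_true] at this
    exact hvz ⟨a, by omega⟩ ha this.symm
  intro a ha b hb e
  rcases lt_trichotomy a b with h | h | h
  · exact absurd e (key a b ha.1 h hb.2)
  · exact h
  · exact absurd e.symm (key b a hb.1 h ha.2)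

lemma neighborSet_hierGraph {n k i : ℕ} (hi1 : 1 ≤ i) (hik : i + 1 ≤ k) (v : Fin k → ZMod n)
    (hvi : v ⟨i - 1, by omega⟩ = 0) (hvz : ∀ j : Fin k, i ≤ (j : ℕ) → v j ≠ 0) :
    (hierGraph n k).neighborSet v =
      changeAt v ⟨k - 1, by omega⟩ ∪ truncate v '' Set.Ico i (k - 1) := by
  have hlast : v ⟨k - 1, by omega⟩ ≠ 0 := hvz _ (by simp only; omega)
  ext w
  rw [Set.mem_union, ← rule1_iff_mem_changeAt (by omega),
    ← rule2_iff_mem_truncate hi1 hik v w hvi hvz, SimpleGraph.mem_neighborSet, hierGraph,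
    SimpleGraph.fromRel_adj]
  constructor
  · rintro ⟨-, (h | ⟨m, hm, -, h, -⟩ | ⟨p, hp, -, -, -, -, h⟩) |
      (h | h | ⟨p, hp, -, -, -, -, h⟩)⟩
    · exact Or.inl h
    · exact absurd (h _ (by simp only; omega)) hlast
    · exact absurd (h _ (Fin.lt_def.2 (by simp only; omega))).1 hlast
    · exact Or.inl h.symm
    · exact Or.inr h
    · exact absurd (h _ (Fin.lt_def.2 (by simp only; omega))).2 hlast
  · rintro (h | h)
    · exact ⟨h.1, Or.inl (Or.inl h)⟩
    · refine ⟨?_, Or.inr (Or.inr (Or.inl h))⟩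
      rintro rfl
      obtain ⟨m, hm, -, h2, h3⟩ := h
      exact hlast (h2 _ (by simp only; omega))

/-- The coordinate before the last is kept by changing the last one, and is set to zero by the
truncations considered. -/
lemma disjoint_changeAt_truncate {n k i : ℕ} (hik : i + 1 ≤ k) (v : Fin k → ZMod n)
    (hvz : ∀ j : Fin k, i ≤ (j : ℕ) → v j ≠ 0) :
    Disjoint (changeAt v ⟨k - 1, by omega⟩) (truncate v '' Set.Ico i (k - 1)) := by
  rw [Set.disjoint_left]
  rintro _ hw ⟨m, ⟨him, hmk⟩, rfl⟩
  have h := ((rule1_iff_mem_changeAt (by omega) v _).2 hw).2 ⟨k - 2, by omega⟩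
    (by simp only; omega)
  rw [truncate, if_neg (by simp only; omega)] at h
  exact hvz _ (by simp only; omega) h

/-- a vertex of `H_{n,k}` whose `i`-th coordinate is `0` and whose
coordinates `x_{i+1}, …, x_k` are all nonzero (`1 ≤ i ≤ k-1`), i.e. a peripheral
vertex of a subgraph copy of `H_{n,k-i}`, has degree `n + k - i - 2`. -/
theorem hierGraph_degree_subperipheral (n k : ℕ) (hn : 2 ≤ n) (i : ℕ) (hi1 : 1 ≤ i)
    (hik : i + 1 ≤ k) (v : Fin k → ZMod n)
    (hvi : v ⟨i - 1, by omega⟩ = 0)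
    (hvz : ∀ j : Fin k, i ≤ (j : ℕ) → v j ≠ 0) :
    vdeg (hierGraph n k) v = n + k - i - 2 := by
  have : NeZero n := ⟨by omega⟩
  rw [vdeg, neighborSet_hierGraph hi1 hik v hvi hvz,
    Set.ncard_union_eq (disjoint_changeAt_truncate hik v hvz) (Set.toFinite _) (Set.toFinite _),
    ncard_changeAt hn, (injOn_truncate v hvz).ncard_image, Set.ncard_Ico_nat]
  omega
end

section
/- Assume n ≥ 3. The clustering coefficient of the root vertex r = 00…0 of the hierarchical graph H_{n,k} equals (n−2)^2 / ((n−1)^{k+1} − 2n + 3), as an equality of rational numbers. -/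
/-- The vertices consisting of exactly `i` zeros followed by nonzero coordinates. -/
def zerosThenNonzero (n k i : ℕ) [NeZero n] : Finset (Fin k → ZMod n) :=
  Fintype.piFinset fun j => if (j : ℕ) < i then {0} else Finset.univ.erase 0

/-- The neighborhood of the root, described explicitly. -/
def rootNbrs (n k : ℕ) [NeZero n] : Finset (Fin k → ZMod n) :=
  (Finset.range k).biUnion fun i => zerosThenNonzero n k i

lemma mem_zerosThenNonzero {n k i : ℕ} [NeZero n] {y : Fin k → ZMod n} :
    y ∈ zerosThenNonzero n k i ↔ ∀ j : Fin k, (y j = 0 ↔ (j : ℕ) < i) := by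
  rw [zerosThenNonzero, Fintype.mem_piFinset]
  refine forall_congr' fun j => ?_
  by_cases h : (j : ℕ) < i <;> simp [h]

lemma mem_rootNbrs {n k : ℕ} [NeZero n] {y : Fin k → ZMod n} :
    y ∈ rootNbrs n k ↔ ∃ i < k, ∀ j : Fin k, (y j = 0 ↔ (j : ℕ) < i) := by
  simp [rootNbrs, mem_zerosThenNonzero]

lemma card_zerosThenNonzero (n k i : ℕ) [NeZero n] (hi : i ≤ k) :
    (zerosThenNonzero n k i).card = (n - 1) ^ (k - i) := by
  rw [zerosThenNonzero, Fintype.card_piFinset]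
  have h1 : ∀ j : Fin k, (if (j : ℕ) < i then ({0} : Finset (ZMod n))
      else Finset.univ.erase 0).card = if (j : ℕ) < i then 1 else n - 1 := by
    intro j
    split_ifs <;> simp [ZMod.card]
  simp only [h1]
  rw [Fin.prod_univ_eq_prod_range (fun j => if j < i then 1 else n - 1) k]
  obtain ⟨d, rfl⟩ := Nat.exists_eq_add_of_le hi
  rw [Finset.prod_range_add, Finset.prod_eq_one]
  · simp
  · intro j hj
    simp [Finset.mem_range.mp hj]

lemma card_rootNbrs (m k : ℕ) :
    ((rootNbrs (m + 1) k).card : ℚ) * ((m : ℚ) - 1) = (m : ℚ) ^ (k + 1) - m := by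
  have hcard : (rootNbrs (m + 1) k).card = ∑ i ∈ Finset.range k, m ^ (i + 1) := by
    rw [rootNbrs, Finset.card_biUnion]
    · rw [← Finset.sum_range_reflect]
      refine Finset.sum_congr rfl fun i hi => ?_
      have hi := Finset.mem_range.mp hi
      rw [card_zerosThenNonzero _ _ _ (by omega), Nat.add_sub_cancel]
      congr 1
      omega
    · intro i hi j hj hij
      simp only [Finset.coe_range, Set.mem_Iio] at hi hj
      rw [Function.onFun, Finset.disjoint_left]
      intro y hy hy'
      rw [mem_zerosThenNonzero] at hy hy'
      -- The coordinate at the smaller of the two indices is both zero and nonzero.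
      have h1 := (hy ⟨i, hi⟩).symm.trans (hy' ⟨i, hi⟩)
      have h2 := (hy ⟨j, hj⟩).symm.trans (hy' ⟨j, hj⟩)
      simp only at h1 h2
      omega
  rw [hcard]
  push_cast
  simp only [pow_succ (m : ℚ), ← Finset.sum_mul]
  linear_combination (m : ℚ) * geom_sum_mul (m : ℚ) k

lemma hierGraph_adj_root {n k : ℕ} [NeZero n] {y : Fin (k + 1) → ZMod n} :
    (hierGraph n (k + 1)).Adj (hierRoot n (k + 1)) y ↔ y ∈ rootNbrs n (k + 1) := by
  rw [mem_rootNbrs, hierGraph, SimpleGraph.fromRel_adj]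
  constructor
  · -- A vertex agreeing with the root outside the last coordinate is `k` zeros and a nonzero.
    have key : y ≠ hierRoot n (k + 1) → (∀ j : Fin (k + 1), (j : ℕ) + 1 < k + 1 → y j = 0) →
        ∃ i < k + 1, ∀ j : Fin (k + 1), (y j = 0 ↔ (j : ℕ) < i) := by
      intro hne h
      refine ⟨k, by omega, fun j => ⟨fun hj => ?_, fun hj => h j (by omega)⟩⟩
      by_contra hjk
      refine hne (funext fun l => ?_)
      by_cases hl : (l : ℕ) < k
      · exact h l (by omega)
      · rw [show l = j from Fin.ext (by omega)]
        exact hj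
    rintro ⟨hne, (⟨-, h⟩ | ⟨i, hi, h1, h2, h3⟩ | ⟨p, -, -, h, -⟩) |
      (⟨-, h⟩ | ⟨i, hi, h1, h2, h3⟩ | ⟨p, -, -, -, h, -⟩)⟩
    · exact key hne.symm fun j hj => (h j hj).symm
    · refine ⟨i, by omega, fun j => ⟨fun hj => ?_, fun hj => (h1 j hj).symm⟩⟩
      by_contra hji
      exact h3 j (by omega) hj
    · exact absurd rfl h
    · exact key hne.symm fun j hj => h j hj
    · exact absurd rfl (h3 (Fin.last k) (by simp; omega))
    · exact absurd rfl h
  · rintro ⟨i, hi, h⟩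
    have hne : hierRoot n (k + 1) ≠ y := by
      rintro rfl
      exact lt_irrefl i ((h ⟨i, hi⟩).mp rfl)
    refine ⟨hne, Or.inl ?_⟩
    by_cases hik : i = k
    · exact Or.inl ⟨hne, fun j hj => ((h j).mpr (by omega)).symm⟩
    · exact Or.inr (Or.inl ⟨i, by omega, fun j hj => ((h j).mpr hj).symm, fun _ _ => rfl,
        fun j hj hj0 => absurd ((h j).mp hj0) (by omega)⟩)

lemma last_ne_zero_of_mem {n k : ℕ} [NeZero n] {y : Fin (k + 1) → ZMod n}
    (hy : y ∈ rootNbrs n (k + 1)) : y (Fin.last k) ≠ 0 := by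
  obtain ⟨i, hi, h⟩ := mem_rootNbrs.mp hy
  intro h0
  have := (h _).mp h0
  simp only [Fin.val_last] at this
  omega

lemma adj_of_mem_rootNbrs {n k : ℕ} [NeZero n] {x y : Fin (k + 1) → ZMod n}
    (hx : x ∈ rootNbrs n (k + 1)) (hy : y ∈ rootNbrs n (k + 1)) :
    (hierGraph n (k + 1)).Adj x y ↔ x ≠ y ∧ ∀ j : Fin (k + 1), (j : ℕ) < k → x j = y j := by
  have hx' := last_ne_zero_of_mem hx
  have hy' := last_ne_zero_of_mem hy
  -- Rules (2) and (3) force the last coordinate of their first vertex to vanish.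
  have h2 : ∀ u v : Fin (k + 1) → ZMod n, u (Fin.last k) ≠ 0 → ¬ rule2 u v := by
    rintro u v hu ⟨i, hi, -, h, -⟩
    exact hu (h _ (by simp; omega))
  have h3 : ∀ u v : Fin (k + 1) → ZMod n, u (Fin.last k) ≠ 0 → ¬ rule3 u v := by
    rintro u v hu ⟨p, hp, -, -, -, -, h⟩
    exact hu (h _ (by rw [Fin.lt_def, Fin.val_last]; omega)).1
  rw [hierGraph, SimpleGraph.fromRel_adj]
  simp only [h2 x y hx', h3 x y hx', h2 y x hy', h3 y x hy', or_false, rule1]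
  constructor
  · rintro ⟨hne, ⟨-, h⟩ | ⟨-, h⟩⟩
    · exact ⟨hne, fun j hj => h j (by omega)⟩
    · exact ⟨hne, fun j hj => (h j (by omega)).symm⟩
  · rintro ⟨hne, h⟩
    exact ⟨hne, Or.inl ⟨hne, fun j hj => h j (by omega)⟩⟩

/-- Changing the last coordinate of a neighbor of the root to a nonzero value gives another
neighbor, because the last coordinate lies after the initial block of zeros. -/
lemma update_last_mem {n k : ℕ} [NeZero n] {x : Fin (k + 1) → ZMod n}
    (hx : x ∈ rootNbrs n (k + 1)) {a : ZMod n} (ha : a ≠ 0) :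
    Function.update x (Fin.last k) a ∈ rootNbrs n (k + 1) := by
  obtain ⟨i, hi, h⟩ := mem_rootNbrs.mp hx
  refine mem_rootNbrs.mpr ⟨i, hi, fun j => ?_⟩
  by_cases hj : j = Fin.last k
  · subst hj
    simp [ha]
    omega
  · rw [Function.update_of_ne hj, h]

/-- The subgraph of `G` formed by the edges with both endpoints in the neighborhood of `v`,
kept on the full vertex set. -/
def nbrGraph {V : Type*} (G : SimpleGraph V) (v : V) : SimpleGraph V where
  Adj x y := G.Adj x y ∧ G.Adj v x ∧ G.Adj v y
  symm := ⟨fun _ _ h => ⟨h.1.symm, h.2.2, h.2.1⟩⟩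
  loopless := ⟨fun _ h => G.loopless.irrefl _ h.1⟩

lemma localEdges_eq_ncard {V : Type*} (G : SimpleGraph V) (v : V) :
    localEdges G v = (nbrGraph G v).edgeSet.ncard := by
  rw [localEdges]
  congr 1
  ext e
  induction e with
  | _ x y => simp [nbrGraph]

open Classical in
lemma degree_nbrGraph {n k : ℕ} [NeZero n] (x : Fin (k + 1) → ZMod n) :
    (nbrGraph (hierGraph n (k + 1)) (hierRoot n (k + 1))).degree x =
      if x ∈ rootNbrs n (k + 1) then n - 1 - 1 else 0 := by
  split_ifs with hx
  · -- The neighbors of `x` arise by changing its last coordinate to another nonzero value.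
    have hset : (nbrGraph (hierGraph n (k + 1)) (hierRoot n (k + 1))).neighborFinset x =
        ((Finset.univ.erase (0 : ZMod n)).erase (x (Fin.last k))).image
          (Function.update x (Fin.last k)) := by
      ext y
      rw [SimpleGraph.mem_neighborFinset]
      simp only [nbrGraph, hierGraph_adj_root, Finset.mem_image, Finset.mem_erase,
        Finset.mem_univ, and_true]
      constructor
      · rintro ⟨hadj, -, hy⟩
        obtain ⟨hne, h⟩ := (adj_of_mem_rootNbrs hx hy).mp hadj
        have hupd : Function.update x (Fin.last k) (y (Fin.last k)) = y := by
          funext j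
          by_cases hj : j = Fin.last k
          · subst hj
            simp
          · rw [Function.update_of_ne hj]
            exact h j (Fin.val_lt_last hj)
        refine ⟨y (Fin.last k), ⟨fun heq => hne ?_, last_ne_zero_of_mem hy⟩, hupd⟩
        rw [← hupd, heq, Function.update_eq_self]
      · rintro ⟨a, ⟨hax, ha⟩, rfl⟩
        have hy := update_last_mem hx ha
        refine ⟨(adj_of_mem_rootNbrs hx hy).mpr ⟨fun heq => hax ?_, fun j hj => ?_⟩, hx, hy⟩
        · rw [heq]
          simp
        · rw [Function.update_of_ne]
          rintro rfl
          simp at hj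
    rw [← SimpleGraph.card_neighborFinset_eq_degree, hset,
      Finset.card_image_of_injective _ (Function.update_injective x _),
      Finset.card_erase_of_mem (by simpa using last_ne_zero_of_mem hx),
      Finset.card_erase_of_mem (Finset.mem_univ _), Finset.card_univ, ZMod.card]
  · rw [← SimpleGraph.card_neighborFinset_eq_degree, Finset.card_eq_zero,
      Finset.eq_empty_iff_forall_notMem]
    intro y hy
    rw [SimpleGraph.mem_neighborFinset] at hy
    exact hx (hierGraph_adj_root.mp hy.2.1)

lemma two_mul_localEdges (n k : ℕ) [NeZero n] :
    2 * localEdges (hierGraph n (k + 1)) (hierRoot n (k + 1)) =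
      (rootNbrs n (k + 1)).card * (n - 1 - 1) := by
  classical
  rw [localEdges_eq_ncard, ← SimpleGraph.coe_edgeFinset, Set.ncard_coe_finset,
    ← SimpleGraph.sum_degrees_eq_twice_card_edges]
  simp [degree_nbrGraph]

lemma vdeg_root (n k : ℕ) [NeZero n] :
    vdeg (hierGraph n (k + 1)) (hierRoot n (k + 1)) = (rootNbrs n (k + 1)).card := by
  rw [vdeg, ← Set.ncard_coe_finset]
  congr 1
  ext y
  simp [hierGraph_adj_root]

/-- for `n ≥ 3`, the clustering coefficient of the root of
`H_{n,k}` equals `(n-2)^2 / ((n-1)^{k+1} - 2n + 3)`. -/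
theorem hierGraph_clustering_root (n k : ℕ) (hn : 3 ≤ n) (hk : 1 ≤ k) :
    clustering (hierGraph n k) (hierRoot n k) =
      ((n : ℚ) - 2) ^ 2 / (((n : ℚ) - 1) ^ (k + 1) - 2 * (n : ℚ) + 3) := by
  obtain ⟨k, rfl⟩ := Nat.exists_eq_add_of_le' hk
  obtain ⟨m, rfl⟩ := Nat.exists_eq_add_of_le' (show 1 ≤ n by omega)
  have hm : (2 : ℚ) ≤ m := by exact_mod_cast (show 2 ≤ m by omega)
  have hδ := card_rootNbrs m (k + 1)
  have hε : (2 : ℚ) * localEdges (hierGraph (m + 1) (k + 1)) (hierRoot (m + 1) (k + 1)) =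
      (rootNbrs (m + 1) (k + 1)).card * ((m : ℚ) - 1) := by
    have h := two_mul_localEdges (m + 1) k
    rw [Nat.add_sub_cancel] at h
    have h' := congrArg (Nat.cast : ℕ → ℚ) h
    rw [Nat.cast_mul, Nat.cast_mul, Nat.cast_sub (by omega : 1 ≤ m)] at h'
    exact_mod_cast h'
  rw [clustering, hε, vdeg_root]
  set δ : ℚ := ((rootNbrs (m + 1) (k + 1)).card : ℚ)
  -- From `m ^ (k + 2) ≥ m ^ 2` one gets `δ ≥ m ≥ 2`, so no denominator vanishes.
  have hpow : (m : ℚ) ^ 2 ≤ (m : ℚ) ^ (k + 1 + 1) :=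
    pow_le_pow_right₀ (by linarith) (by omega)
  have hδ2 : 2 ≤ δ := by
    by_contra! hlt
    nlinarith
  have hden : ((m + 1 : ℕ) : ℚ) - 1 = m := by push_cast; ring
  rw [hden, show (m : ℚ) ^ (k + 1 + 1) - 2 * ((m + 1 : ℕ) : ℚ) + 3 = (δ - 1) * ((m : ℚ) - 1) by
    push_cast; linear_combination -hδ]
  have h1 : δ ≠ 0 := by linarith
  have h2 : δ - 1 ≠ 0 := by linarith
  have h3 : (m : ℚ) - 1 ≠ 0 := by linarith
  push_cast
  field_simp
  ring
end

section
/- The number T_{n,k} of triangles (3-cliques) of the hierarchical graph H_{n,k} satisfies T_{n,k} = (1/2)(n−2)(1 − n/3 − (n−1)^{k+1} + (2/3)n^k(2n−3)); equivalently, 6·T_{n,k} = (n−2)(3 − n − 3(n−1)^{k+1} + 2n^k(2n−3)). -/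
namespace HierTriangles

variable {n k : ℕ}

/-! ### Copies of `H_{n,k}` in `H_{n,k+1}` and the edges between them -/

lemma adj_iff (x y : Fin k → ZMod n) : (hierGraph n k).Adj x y ↔
    x ≠ y ∧ ((rule1 x y ∨ rule2 x y ∨ rule3 x y) ∨ (rule1 y x ∨ rule2 y x ∨ rule3 y x)) :=
  Iff.rfl

/-- The vertex `ax` of the copy of `H_{n,k}` with first coordinate `a`. -/
def pre (a : ZMod n) (x : Fin k → ZMod n) : Fin (k + 1) → ZMod n := Fin.cons a x

/-- The vertex `pa` with last coordinate `a`. -/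
def post (p : Fin k → ZMod n) (a : ZMod n) : Fin (k + 1) → ZMod n := Fin.snoc p a

@[simp] lemma pre_zero (a : ZMod n) (x : Fin k → ZMod n) : pre a x 0 = a := rfl
@[simp] lemma pre_succ (a : ZMod n) (x : Fin k → ZMod n) (j : Fin k) : pre a x j.succ = x j := rfl
@[simp] lemma post_last (p : Fin k → ZMod n) (a : ZMod n) : post p a (Fin.last k) = a := by
  simp [post]
@[simp] lemma post_castSucc (p : Fin k → ZMod n) (a : ZMod n) (j : Fin k) :
    post p a j.castSucc = p j := by
  simp [post]

lemma pre_inj {a b : ZMod n} {x y : Fin k → ZMod n} : pre a x = pre b y ↔ a = b ∧ x = y :=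
  Fin.cons_inj

lemma post_inj {a b : ZMod n} {x y : Fin k → ZMod n} : post x a = post y b ↔ x = y ∧ a = b :=
  Fin.snoc_inj

lemma exists_pre (X : Fin (k + 1) → ZMod n) : ∃ a x, X = pre a x :=
  ⟨X 0, Fin.tail X, (Fin.cons_self_tail X).symm⟩

lemma exists_post (X : Fin (k + 1) → ZMod n) : ∃ p a, X = post p a :=
  ⟨Fin.init X, X (Fin.last k), (Fin.snoc_init_self X).symm⟩

lemma pre_eq_zero {a : ZMod n} {x : Fin k → ZMod n} : pre a x = 0 ↔ a = 0 ∧ x = 0 := by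
  rw [← pre_inj]
  refine Eq.congr_right ?_
  funext j
  refine Fin.cases rfl (fun _ => rfl) j

lemma rule1_cons_same (a : ZMod n) (x y : Fin k → ZMod n) :
    rule1 (pre a x) (pre a y) ↔ rule1 x y := by
  simp [rule1, Fin.forall_fin_succ, pre_inj]

lemma rule2_cons_same (a : ZMod n) (x y : Fin k → ZMod n) :
    rule2 (pre a x) (pre a y) ↔ rule2 x y := by
  constructor
  · rintro ⟨i, hi, h1, h2, h3⟩
    rcases i with _ | i
    · exact absurd (h2 0 (by simp)) (h3 0 (by simp))
    · exact ⟨i, by omega, fun j hj => h1 j.succ (by simpa using hj),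
        fun j hj => h2 j.succ (by simpa using hj), fun j hj => h3 j.succ (by simpa using hj)⟩
  · rintro ⟨i, hi, h1, h2, h3⟩
    refine ⟨i + 1, by omega, ?_, ?_, ?_⟩ <;> simpa [Fin.forall_fin_succ]

lemma rule3_cons_same (a : ZMod n) (x y : Fin k → ZMod n) :
    rule3 (pre a x) (pre a y) ↔ rule3 x y := by
  constructor
  · rintro ⟨p, hp, h1, h2, h3, h4, h5⟩
    induction p using Fin.cases with
    | zero => exact absurd rfl h4
    | succ p =>
      refine ⟨p, by simpa using hp, fun j hj => h1 j.succ (by simpa using hj), h2, h3, h4,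
        fun j hj => h5 j.succ (by simpa using hj)⟩
  · rintro ⟨p, hp, h1, h2, h3, h4, h5⟩
    refine ⟨p.succ, by simpa using hp, ?_, h2, h3, h4, ?_⟩ <;> simpa [Fin.forall_fin_succ]

lemma adj_cons_same (a : ZMod n) (x y : Fin k → ZMod n) :
    (hierGraph n (k + 1)).Adj (pre a x) (pre a y) ↔ (hierGraph n k).Adj x y := by
  simp only [adj_iff, rule1_cons_same, rule2_cons_same, rule3_cons_same, ne_eq, pre_inj,
    true_and]

lemma rule2_of_head_ne {X Y : Fin (k + 1) → ZMod n} (h : X 0 ≠ Y 0) (hr : rule2 X Y) :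
    X = 0 ∧ Y ∈ peripheral n (k + 1) := by
  obtain ⟨i, hi, h1, h2, h3⟩ := hr
  rcases i with _ | i
  · exact ⟨funext fun j => h2 j (by simp), fun j => h3 j (by simp)⟩
  · exact absurd (h1 0 (by simp)) h

lemma rule3_of_head_ne {X Y : Fin (k + 1) → ZMod n} (h : X 0 ≠ Y 0) (hr : rule3 X Y) :
    X 0 ≠ 0 ∧ Y 0 ≠ 0 ∧ X = pre (X 0) 0 ∧ Y = pre (Y 0) 0 := by
  obtain ⟨p, hp, h1, h2, h3, h4, h5⟩ := hr
  induction p using Fin.cases with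
  | succ p => exact absurd (h1 0 (by simp)) h
  | zero =>
    refine ⟨h2, h3, ?_, ?_⟩ <;> funext j <;> induction j using Fin.cases with
    | zero => rfl
    | succ j => simp [h5 j.succ (by simp)]

/-- The edges between different copies of `H_{n,k}` inside `H_{n,k+1}`. -/
lemma adj_of_head_ne (hk : 1 ≤ k) {X Y : Fin (k + 1) → ZMod n} (h : X 0 ≠ Y 0)
    (ha : (hierGraph n (k + 1)).Adj X Y) :
    (X = 0 ∧ Y ∈ peripheral n (k + 1)) ∨ (Y = 0 ∧ X ∈ peripheral n (k + 1)) ∨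
      (X 0 ≠ 0 ∧ Y 0 ≠ 0 ∧ X = pre (X 0) 0 ∧ Y = pre (Y 0) 0) := by
  rcases ha with ⟨-, (h1 | h2 | h3) | (h1 | h2 | h3)⟩
  · exact absurd (h1.2 0 (by simp; omega)) h
  · exact Or.inl (rule2_of_head_ne h h2)
  · exact Or.inr (Or.inr (rule3_of_head_ne h h3))
  · exact absurd (h1.2 0 (by simp; omega)).symm h
  · exact Or.inr (Or.inl (rule2_of_head_ne h.symm h2))
  · obtain ⟨a, b, c, d⟩ := rule3_of_head_ne h.symm h3
    exact Or.inr (Or.inr ⟨b, a, d, c⟩)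

/-- Rule (2) with an empty common prefix. -/
lemma adj_root_peripheral (hk : 1 ≤ k) {Y : Fin (k + 1) → ZMod n}
    (hY : Y ∈ peripheral n (k + 1)) : (hierGraph n (k + 1)).Adj 0 Y := by
  refine ⟨fun h => hY 0 (by rw [← h]; rfl), Or.inl (Or.inr (Or.inl ?_))⟩
  exact ⟨0, by omega, by simp, by simp, fun j _ => hY j⟩

/-- Rule (3) at the first coordinate. -/
lemma adj_roots (hk : 1 ≤ k) {a b : ZMod n} (ha : a ≠ 0) (hb : b ≠ 0) (hab : a ≠ b) :
    (hierGraph n (k + 1)).Adj (pre a 0) (pre b 0) := by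
  refine ⟨fun h => hab (pre_inj.1 h).1, Or.inl (Or.inr (Or.inr ?_))⟩
  exact ⟨0, by simp; omega, by simp, ha, hb, hab, by simp [Fin.forall_fin_succ]⟩

/-- Rules (2) and (3) both need a vertex with last coordinate `0`, so adjacent peripheral vertices
are adjacent by rule (1). -/
lemma adj_of_peripheral {p q : Fin k → ZMod n} {a b : ZMod n}
    (hX : post p a ∈ peripheral n (k + 1)) (hY : post q b ∈ peripheral n (k + 1))
    (h : (hierGraph n (k + 1)).Adj (post p a) (post q b)) : p = q ∧ a ≠ b := by
  have key : ∀ X Y : Fin (k + 1) → ZMod n, X ∈ peripheral n (k + 1) →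
      (rule1 X Y ∨ rule2 X Y ∨ rule3 X Y) → rule1 X Y := by
    rintro X Y hX (h | ⟨i, hi, -, h, -⟩ | ⟨i, hi, -, -, -, -, h⟩)
    · exact h
    · exact absurd (h (Fin.last k) (by simp; omega)) (hX _)
    · exact absurd (h (Fin.last k) (by rw [Fin.lt_def]; simp; omega)).1 (hX _)
  have hpq : p = q := by
    rcases h.2 with h | h
    · funext j
      simpa using (key _ _ hX h).2 j.castSucc (by simp)
    · funext j
      simpa using ((key _ _ hY h).2 j.castSucc (by simp)).symm
  refine ⟨hpq, fun hab => h.1 ?_⟩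
  rw [hpq, hab]

lemma adj_post {p : Fin k → ZMod n} {a b : ZMod n} (hab : a ≠ b) :
    (hierGraph n (k + 1)).Adj (post p a) (post p b) := by
  have hne : post p a ≠ post p b := fun h => hab (post_inj.1 h).2
  refine ⟨hne, Or.inl (Or.inl ⟨hne, fun j hj => ?_⟩)⟩
  induction j using Fin.lastCases with
  | last => simp at hj
  | cast j => simp

lemma post_mem_peripheral {p : Fin k → ZMod n} {a : ZMod n} :
    post p a ∈ peripheral n (k + 1) ↔ (∀ j, p j ≠ 0) ∧ a ≠ 0 := by
  refine ⟨fun h => ⟨fun j => by simpa using h j.castSucc, by simpa using h (Fin.last k)⟩, ?_⟩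
  rintro ⟨h1, h2⟩ j
  induction j using Fin.lastCases with
  | last => simpa
  | cast j => simpa using h1 j

/-! ### The recursion for the number of triangles -/

section Count

open Finset
open scoped Classical

variable [NeZero n]

variable (n k) in
/-- The triangles of `H_{n,k}`, as a finset. -/
noncomputable def tri : Finset (Finset (Fin k → ZMod n)) := (hierGraph n k).cliqueFinset 3

lemma mem_tri {s : Finset (Fin k → ZMod n)} : s ∈ tri n k ↔ ∃ a b c,
    (hierGraph n k).Adj a b ∧ (hierGraph n k).Adj a c ∧ (hierGraph n k).Adj b c ∧
      s = {a, b, c} := by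
  rw [tri, SimpleGraph.mem_cliqueFinset_iff, SimpleGraph.is3Clique_iff]

variable (n) in
/-- The nonzero elements of `Z_n`. -/
noncomputable def nz : Finset (ZMod n) := univ.erase 0

lemma mem_nz {a : ZMod n} : a ∈ nz n ↔ a ≠ 0 := by simp [nz]

lemma card_nz : (nz n).card = n - 1 := by simp [nz, ZMod.card]

variable (n k) in
/-- The triangles of `H_{n,k+1}` inside one copy of `H_{n,k}`. -/
noncomputable def triCopy : Finset (Finset (Fin (k + 1) → ZMod n)) :=
  (univ ×ˢ tri n k).image fun q : ZMod n × Finset (Fin k → ZMod n) => q.2.image (pre q.1)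

variable (n k) in
/-- The triangles of `H_{n,k+1}` formed by the root and two adjacent peripheral vertices. -/
noncomputable def triRoot : Finset (Finset (Fin (k + 1) → ZMod n)) :=
  (Fintype.piFinset (fun _ : Fin k => nz n) ×ˢ (nz n).powersetCard 2).image
    fun q : (Fin k → ZMod n) × Finset (ZMod n) => insert 0 (q.2.image (post q.1))

variable (n k) in
/-- The triangles of `H_{n,k+1}` formed by the roots of three nonzero copies of `H_{n,k}`. -/
noncomputable def triTop : Finset (Finset (Fin (k + 1) → ZMod n)) :=
  ((nz n).powersetCard 3).image fun e => e.image fun a => pre a 0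

lemma triCopy_head {s : Finset (Fin (k + 1) → ZMod n)} (hs : s ∈ triCopy n k) :
    ∀ X ∈ s, ∀ Y ∈ s, X 0 = Y 0 := by
  simp only [triCopy, mem_image] at hs
  obtain ⟨q, -, rfl⟩ := hs
  simp

lemma triRoot_head {s : Finset (Fin (k + 1) → ZMod n)} (hs : s ∈ triRoot n k) :
    0 ∈ s ∧ ∃ Y ∈ s, Y 0 ≠ 0 := by
  simp only [triRoot, mem_image, mem_product, mem_powersetCard, Fintype.mem_piFinset, mem_nz] at hs
  obtain ⟨⟨p, e⟩, ⟨hp, he, hc⟩, rfl⟩ := hs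
  refine ⟨mem_insert_self _ _, ?_⟩
  obtain ⟨a, ha⟩ : e.Nonempty := by rw [← card_pos]; simp at hc; omega
  refine ⟨post p a, mem_insert_of_mem (mem_image_of_mem _ ha), ?_⟩
  exact post_mem_peripheral.2 ⟨hp, mem_nz.1 (he ha)⟩ 0

lemma triTop_head {s : Finset (Fin (k + 1) → ZMod n)} (hs : s ∈ triTop n k) :
    0 ∉ s ∧ ∃ X ∈ s, ∃ Y ∈ s, X 0 ≠ Y 0 := by
  simp only [triTop, mem_image, mem_powersetCard] at hs
  obtain ⟨e, ⟨he, hc⟩, rfl⟩ := hs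
  constructor
  · simp only [mem_image, pre_eq_zero]
    rintro ⟨a, ha, h0, -⟩
    exact mem_nz.1 (he ha) h0
  · obtain ⟨a, ha, b, hb, hab⟩ := one_lt_card.1 (by omega : 1 < e.card)
    exact ⟨_, mem_image_of_mem _ ha, _, mem_image_of_mem _ hb, hab⟩

lemma card_triCopy : (triCopy n k).card = n * (tri n k).card := by
  rw [triCopy, card_image_of_injOn, card_product, card_univ, ZMod.card]
  rintro ⟨a, s⟩ hs ⟨b, t⟩ - h
  simp only [coe_product, coe_univ, Set.mem_prod, mem_coe, mem_tri] at hs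
  obtain ⟨-, x, y, z, -, -, -, hs⟩ := hs
  have hx : pre a x ∈ t.image (pre b) := by
    rw [← show s.image (pre a) = t.image (pre b) from h]
    exact mem_image_of_mem _ (by simp [hs])
  obtain ⟨x', -, hx'⟩ := mem_image.1 hx
  obtain rfl : b = a := (pre_inj.1 hx').1
  have hst : s = t :=
    image_injective (fun u v huv => (pre_inj.1 huv).2) h
  rw [hst]

lemma card_triTop : (triTop n k).card = (n - 1).choose 3 := by
  rw [triTop, card_image_of_injective, card_powersetCard, card_nz]
  exact image_injective fun a b h => (pre_inj.1 h).1

lemma card_triRoot : (triRoot n k).card = (n - 1) ^ k * (n - 1).choose 2 := by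
  rw [triRoot, card_image_of_injOn, card_product, Fintype.card_piFinset_const, card_powersetCard,
    card_nz]
  have key : ∀ (p q : Fin k → ZMod n) (e f : Finset (ZMod n)), (∀ a ∈ e, a ≠ 0) →
      insert 0 (e.image (post p)) = insert 0 (f.image (post q)) →
      ∀ a ∈ e, p = q ∧ a ∈ f := by
    intro p q e f he h a ha
    have h1 : post p a ∈ insert 0 (f.image (post q)) := by
      rw [← h]; exact mem_insert_of_mem (mem_image_of_mem _ ha)
    rcases mem_insert.1 h1 with h1 | h1
    · exact absurd (by simpa using congrFun h1 (Fin.last k)) (he a ha)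
    · obtain ⟨b, hb, hbp⟩ := mem_image.1 h1
      obtain ⟨rfl, rfl⟩ := post_inj.1 hbp
      exact ⟨rfl, hb⟩
  rintro ⟨p, e⟩ hs ⟨q, f⟩ ht h
  simp only [coe_product, Set.mem_prod, mem_coe, mem_powersetCard] at hs ht
  have he : ∀ a ∈ e, a ≠ 0 := fun a ha => mem_nz.1 (hs.2.1 ha)
  have hf : ∀ a ∈ f, a ≠ 0 := fun a ha => mem_nz.1 (ht.2.1 ha)
  obtain ⟨a, ha⟩ : e.Nonempty := by rw [← card_pos]; omega
  have hef : e = f := Subset.antisymm (fun a ha => (key p q e f he h a ha).2)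
    (fun a ha => (key q p f e hf h.symm a ha).2)
  rw [(key p q e f he h a ha).1, hef]

/-- The case analysis: every triangle is of one of the three kinds. -/
lemma tri_subset (hk : 1 ≤ k) {s : Finset (Fin (k + 1) → ZMod n)} (hs : s ∈ tri n (k + 1)) :
    s ∈ triCopy n k ∨ s ∈ triRoot n k ∨ s ∈ triTop n k := by
  obtain ⟨X, Y, Z, hXY, hXZ, hYZ, rfl⟩ := mem_tri.1 hs
  by_cases hhead : X 0 = Y 0 ∧ X 0 = Z 0
  · left
    obtain ⟨a, x, rfl⟩ := exists_pre X
    obtain ⟨b, y, rfl⟩ := exists_pre Y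
    obtain ⟨c, z, rfl⟩ := exists_pre Z
    simp only [pre_zero] at hhead
    obtain ⟨rfl, rfl⟩ := hhead
    rw [adj_cons_same] at hXY hXZ hYZ
    refine mem_image.2 ⟨(a, {x, y, z}), ?_, by simp [image_insert]⟩
    simpa using mem_tri.2 ⟨x, y, z, hXY, hXZ, hYZ, rfl⟩
  right
  by_cases h0 : (0 : Fin (k + 1) → ZMod n) ∈ ({X, Y, Z} : Finset _)
  · left
    have key : ∀ Y Z : Fin (k + 1) → ZMod n, (hierGraph n (k + 1)).Adj 0 Y →
        (hierGraph n (k + 1)).Adj 0 Z → (hierGraph n (k + 1)).Adj Y Z →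
        ¬ (0 = Y 0 ∧ 0 = Z 0) → {0, Y, Z} ∈ triRoot n k := by
      intro Y Z hY hZ hYZ hh
      -- A neighbour of the root outside copy `0` is peripheral.
      have per : ∀ W : Fin (k + 1) → ZMod n, (hierGraph n (k + 1)).Adj 0 W → W 0 ≠ 0 →
          W ∈ peripheral n (k + 1) := by
        intro W hW hW0
        rcases adj_of_head_ne hk (X := 0) (by simpa using hW0.symm) hW with h | h | h
        · exact h.2
        · exact absurd h.1.symm hW.1
        · exact absurd rfl h.1
      -- A vertex of copy `0` adjacent to a vertex outside it is the root.
      have copy : ∀ V W : Fin (k + 1) → ZMod n, (hierGraph n (k + 1)).Adj V W → V 0 = 0 →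
          W 0 ≠ 0 → V = 0 := by
        intro V W h hV hW
        rcases adj_of_head_ne hk (by rw [hV]; exact hW.symm) h with h | h | h
        · exact h.1
        · exact absurd (by rw [h.1]; rfl) hW
        · exact absurd hV h.1
      have hY0 : Y 0 ≠ 0 := fun h =>
        hY.1 (copy Y Z hYZ h fun h' => hh ⟨h.symm, h'.symm⟩).symm
      have hZ0 : Z 0 ≠ 0 := fun h => hZ.1 (copy Z Y hYZ.symm h hY0).symm
      have pY := per Y hY hY0
      have pZ := per Z hZ hZ0
      obtain ⟨p, a, rfl⟩ := exists_post Y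
      obtain ⟨q, b, rfl⟩ := exists_post Z
      obtain ⟨rfl, hab⟩ := adj_of_peripheral pY pZ hYZ
      rw [post_mem_peripheral] at pY pZ
      refine mem_image.2 ⟨(p, {a, b}), ?_, by simp [image_insert]⟩
      simp only [mem_product, Fintype.mem_piFinset, mem_powersetCard, insert_subset_iff,
        singleton_subset_iff, mem_nz, card_pair hab]
      exact ⟨pY.1, ⟨pY.2, pZ.2⟩, trivial⟩
    simp only [mem_insert, mem_singleton] at h0
    rcases h0 with rfl | rfl | rfl
    · exact key Y Z hXY hXZ hYZ hhead
    · rw [insert_comm]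
      exact key X Z hXY.symm hYZ hXZ fun h => hhead ⟨h.1.symm, h.1.symm.trans h.2⟩
    · rw [show ({X, Y, 0} : Finset (Fin (k + 1) → ZMod n)) = {0, X, Y} by
        ext; simp; tauto]
      exact key X Y hXZ.symm hYZ.symm hXY fun h => hhead ⟨h.1.symm.trans h.2, h.1.symm⟩
  · right
    simp only [mem_insert, mem_singleton, not_or] at h0
    -- Away from the root, adjacent vertices of different copies are roots of nonzero copies.
    have key : ∀ V W : Fin (k + 1) → ZMod n, 0 ≠ V → 0 ≠ W → (hierGraph n (k + 1)).Adj V W →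
        V 0 ≠ W 0 → (V 0 ≠ 0 ∧ V = pre (V 0) 0) ∧ (W 0 ≠ 0 ∧ W = pre (W 0) 0) := by
      intro V W hV hW h hVW
      rcases adj_of_head_ne hk hVW h with h | h | h
      · exact absurd h.1.symm hV
      · exact absurd h.1.symm hW
      · exact ⟨⟨h.1, h.2.2.1⟩, h.2.1, h.2.2.2⟩
    have kXY := key X Y h0.1 h0.2.1 hXY
    have kXZ := key X Z h0.1 h0.2.2 hXZ
    have kYZ := key Y Z h0.2.1 h0.2.2 hYZ
    have hX : X 0 ≠ 0 ∧ X = pre (X 0) 0 := by grind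
    have hY : Y 0 ≠ 0 ∧ Y = pre (Y 0) 0 := by grind
    have hZ : Z 0 ≠ 0 ∧ Z = pre (Z 0) 0 := by grind
    have dXY : X 0 ≠ Y 0 := fun h => hXY.1 (by rw [hX.2, hY.2, h])
    have dXZ : X 0 ≠ Z 0 := fun h => hXZ.1 (by rw [hX.2, hZ.2, h])
    have dYZ : Y 0 ≠ Z 0 := fun h => hYZ.1 (by rw [hY.2, hZ.2, h])
    refine mem_image.2 ⟨{X 0, Y 0, Z 0}, ?_, ?_⟩
    · simp only [mem_powersetCard, insert_subset_iff, singleton_subset_iff, mem_nz]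
      exact ⟨⟨hX.1, hY.1, hZ.1⟩, card_eq_three.2 ⟨_, _, _, dXY, dXZ, dYZ, rfl⟩⟩
    · simp only [image_insert, image_singleton]
      rw [← hX.2, ← hY.2, ← hZ.2]

lemma triCopy_subset : triCopy n k ⊆ tri n (k + 1) := by
  intro s hs
  simp only [triCopy, mem_image, mem_product, mem_tri] at hs
  obtain ⟨⟨a, t⟩, ⟨-, x, y, z, hxy, hxz, hyz, ht⟩, rfl⟩ := hs
  refine mem_tri.2 ⟨pre a x, pre a y, pre a z, ?_, ?_, ?_, ?_⟩
  · rwa [adj_cons_same]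
  · rwa [adj_cons_same]
  · rwa [adj_cons_same]
  · simp only at ht
    simp [ht, image_insert]

lemma triRoot_subset (hk : 1 ≤ k) : triRoot n k ⊆ tri n (k + 1) := by
  intro s hs
  simp only [triRoot, mem_image, mem_product, mem_powersetCard, Fintype.mem_piFinset, mem_nz] at hs
  obtain ⟨⟨p, e⟩, ⟨hp, he, hc⟩, rfl⟩ := hs
  obtain ⟨a, b, hab, rfl⟩ := card_eq_two.1 hc
  refine mem_tri.2 ⟨0, post p a, post p b, ?_, ?_, adj_post hab, by simp [image_insert]⟩
  · exact adj_root_peripheral hk (post_mem_peripheral.2 ⟨hp, mem_nz.1 (he (by simp))⟩)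
  · exact adj_root_peripheral hk (post_mem_peripheral.2 ⟨hp, mem_nz.1 (he (by simp))⟩)

lemma triTop_subset (hk : 1 ≤ k) : triTop n k ⊆ tri n (k + 1) := by
  intro s hs
  simp only [triTop, mem_image, mem_powersetCard] at hs
  obtain ⟨e, ⟨he, hc⟩, rfl⟩ := hs
  obtain ⟨a, b, c, hab, hac, hbc, rfl⟩ := card_eq_three.1 hc
  have ha := mem_nz.1 (he (show a ∈ _ by simp))
  have hb := mem_nz.1 (he (show b ∈ _ by simp))
  have hc := mem_nz.1 (he (show c ∈ _ by simp))
  exact mem_tri.2 ⟨pre a 0, pre b 0, pre c 0, adj_roots hk ha hb hab, adj_roots hk ha hc hac,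
    adj_roots hk hb hc hbc, by simp [image_insert]⟩

/-- The recursion `T_{n,k+1} = n T_{n,k} + (n-1)^k C(n-1,2) + C(n-1,3)`; the triangles of the three
kinds are told apart by the first coordinates of their vertices and by whether they contain the
root. -/
lemma card_tri_succ (hk : 1 ≤ k) : (tri n (k + 1)).card =
    n * (tri n k).card + (n - 1) ^ k * (n - 1).choose 2 + (n - 1).choose 3 := by
  have hU : tri n (k + 1) = (triCopy n k ∪ triRoot n k) ∪ triTop n k := by
    refine Subset.antisymm (fun s hs => ?_)
      (union_subset (union_subset triCopy_subset (triRoot_subset hk)) (triTop_subset hk))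
    simpa [or_assoc] using tri_subset hk hs
  have hd1 : Disjoint (triCopy n k) (triRoot n k) := by
    refine disjoint_left.2 fun s h1 h2 => ?_
    obtain ⟨h0, Y, hY, hY0⟩ := triRoot_head h2
    exact hY0 (triCopy_head h1 Y hY 0 h0)
  have hd2 : Disjoint (triCopy n k ∪ triRoot n k) (triTop n k) := by
    refine disjoint_left.2 fun s h1 h2 => ?_
    obtain ⟨h0, X, hX, Y, hY, hXY⟩ := triTop_head h2
    rcases mem_union.1 h1 with h1 | h1
    · exact hXY (triCopy_head h1 X hX Y hY)
    · exact h0 (triRoot_head h1).1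
  rw [hU, card_union_of_disjoint hd2, card_union_of_disjoint hd1, card_triCopy, card_triRoot,
    card_triTop]

/-- `H_{n,1}` is the complete graph on `n` vertices. -/
lemma card_tri_one : (tri n 1).card = n.choose 3 := by
  have h : hierGraph n 1 = ⊤ := by
    ext x y
    rw [adj_iff, SimpleGraph.top_adj]
    exact ⟨fun h => h.1, fun h => ⟨h, Or.inl (Or.inl ⟨h, fun j hj => by omega⟩)⟩⟩
  have h2 : tri n 1 = powersetCard 3 univ := by
    ext s
    rw [tri, SimpleGraph.mem_cliqueFinset_iff, h, mem_powersetCard_univ,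
      SimpleGraph.isNClique_iff]
    exact ⟨fun h => h.2, fun h => ⟨fun x _ y _ hxy => hxy, h⟩⟩
  simp [h2, ZMod.card]

end Count

/-! ### The closed form -/

lemma two_mul_choose (m : ℕ) : (2 * m.choose 2 : ℤ) = m * (m - 1) := by
  induction m with
  | zero => simp
  | succ m ih =>
    rw [Nat.choose_succ_succ' m 1, Nat.choose_one_right]
    push_cast
    linear_combination ih

lemma six_mul_choose (m : ℕ) : (6 * m.choose 3 : ℤ) = m * (m - 1) * (m - 2) := by
  induction m with
  | zero => simp
  | succ m ih =>
    rw [Nat.choose_succ_succ' m 2]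
    push_cast
    linear_combination ih + 3 * two_mul_choose m

end HierTriangles

/-- the number of triangles (3-cliques) `T_{n,k}` of `H_{n,k}`
satisfies `6 T_{n,k} = (n-2)(3 - n - 3(n-1)^{k+1} + 2n^k(2n-3))`. -/
theorem hierGraph_triangles (n k : ℕ) (hn : 2 ≤ n) (hk : 1 ≤ k) :
    (6 * (((hierGraph n k).cliqueSet 3).ncard) : ℤ) =
      ((n : ℤ) - 2) *
        (3 - (n : ℤ) - 3 * ((n : ℤ) - 1) ^ (k + 1) + 2 * (n : ℤ) ^ k * (2 * (n : ℤ) - 3)) := by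
  have : NeZero n := ⟨by omega⟩
  classical
  -- `NeZero n` makes `ZMod n` finite, so the set of triangles is the finset `tri n k`.
  have hT : ∀ k, ((hierGraph n k).cliqueSet 3).ncard = (HierTriangles.tri n k).card := by
    intro k
    rw [← Set.ncard_coe_finset, HierTriangles.tri, SimpleGraph.coe_cliqueFinset]
  rw [hT]
  have h2 := HierTriangles.two_mul_choose (n - 1)
  have h3 := HierTriangles.six_mul_choose (n - 1)
  push_cast [Nat.cast_sub (show 1 ≤ n by omega)] at h2 h3
  induction k, hk using Nat.le_induction with
  | base =>
    rw [HierTriangles.card_tri_one]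
    linear_combination HierTriangles.six_mul_choose n
  | succ k hk ih =>
    rw [HierTriangles.card_tri_succ hk]
    push_cast [Nat.cast_sub (show 1 ≤ n by omega)]
    linear_combination (n : ℤ) * ih + 3 * ((n : ℤ) - 1) ^ k * h2 + h3
end
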